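/- arXiv:1305.3782 — 4 statements merged into one kernel-verified Lean document; each statement's English description precedes it below -/
import Mathlib

section
/- Let P ⊆ ℝⁿ × ℝᵈ be a polytope and let F be a facet of P (a face of P of dimension dim P − 1). Then exactly one of the following holds: (i) dim p_x(F) = dim p_x(P), or (ii) dim p_x(F) = dim p_x(P) − 1 and p_x(F) is a face (hence a facet) of the polytope p_x(P). -/
open Set

/-- The dimension of a polytope: the dimension of the direction of its affine span. -/
noncomputable def polyDim {E : Type*} [AddCommGroup E] [Module ℝ E] (P : Set E) : ℕ :=
  Module.finrank ℝ (affineSpan ℝ P).direction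

/-!
Let `p` be the projection, `V` the direction of the affine span of `P`, and `l` a functional whose
maximum over `P` is attained exactly on the facet `F`. By dimension, the direction of `F` is
`V ⊓ ker l`. If `l` does not vanish on `V ⊓ ker p`, then both `V` and `V ⊓ ker p` lose one dimension
when intersected with `ker l`, so by rank-nullity `p(F)` and `p(P)` have the same dimension. If `l`
vanishes on `V ⊓ ker p`, then by rank-nullity the dimension of the image drops by one; moreover `l`
factors on `V` through `p` as a functional `m`, and `m` attains its maximum over `p(P)` exactly on
`p(F)`.
-/

open Module

section LinearAlgebra

variable {K V W : Type*} [Field K] [AddCommGroup V] [Module K V] [AddCommGroup W] [Module K W]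
  {S : Submodule K V} [FiniteDimensional K S] {f : V →ₗ[K] W} {l : Dual K V}

theorem finrank_inf_ker_add_one (hl : ¬S ≤ l.ker) : finrank K ↥(S ⊓ l.ker) + 1 = finrank K S := by
  have hne : l.domRestrict S ≠ 0 := fun h ↦ hl fun v hv ↦ LinearMap.congr_fun h ⟨v, hv⟩
  rw [← Dual.finrank_ker_add_one_of_ne_zero hne, LinearMap.ker_domRestrict,
    ← Submodule.finrank_map_subtype_eq S, Submodule.map_comap_subtype]

variable (S f) in
theorem finrank_map_add_finrank_inf_ker :
    finrank K (S.map f) + finrank K ↥(S ⊓ f.ker) = finrank K S := by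
  rw [← LinearMap.range_domRestrict, ← LinearMap.finrank_range_add_finrank_ker (f.domRestrict S),
    LinearMap.ker_domRestrict, ← Submodule.map_comap_subtype, Submodule.finrank_map_subtype_eq]

theorem finrank_map_inf_ker_of_not_inf_ker_le (h : ¬S ⊓ f.ker ≤ l.ker) :
    finrank K ((S ⊓ l.ker).map f) = finrank K (S.map f) := by
  have hS : finrank K ↥(S ⊓ l.ker) + 1 = finrank K S :=
    finrank_inf_ker_add_one fun hl ↦ h (inf_le_left.trans hl)
  have hSf : finrank K ↥(S ⊓ l.ker ⊓ f.ker) + 1 = finrank K ↥(S ⊓ f.ker) := by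
    rw [inf_right_comm, finrank_inf_ker_add_one h]
  have hrank := finrank_map_add_finrank_inf_ker S f
  have hrank' := finrank_map_add_finrank_inf_ker (S ⊓ l.ker) f
  lia

theorem finrank_map_inf_ker_add_one_of_inf_ker_le (hl : ¬S ≤ l.ker) (h : S ⊓ f.ker ≤ l.ker) :
    finrank K ((S ⊓ l.ker).map f) + 1 = finrank K (S.map f) := by
  have hS := finrank_inf_ker_add_one hl
  have hrank := finrank_map_add_finrank_inf_ker S f
  have hrank' := finrank_map_add_finrank_inf_ker (S ⊓ l.ker) f
  rw [inf_right_comm, inf_eq_left.2 h] at hrank'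
  lia

theorem exists_strongDual_comp_eqOn [TopologicalSpace K] [IsTopologicalRing K]
    [TopologicalSpace W] [SeparatingDual K W] (h : S ⊓ f.ker ≤ l.ker) :
    ∃ m : StrongDual K W, ∀ v ∈ S, m (f v) = l v := by
  obtain ⟨g, hg⟩ : l.domRestrict S ∈ (f.domRestrict S).dualMap.range := by
    rw [LinearMap.range_dualMap_eq_dualAnnihilator_ker, Submodule.mem_dualAnnihilator]
    exact fun v hv ↦ h ⟨v.2, hv⟩
  obtain ⟨m, hm⟩ := SeparatingDual.dualMap_surjective_iff.2 (S.map f).injective_subtype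
    (g.domRestrict (S.map f))
  refine ⟨m, fun v hv ↦ ?_⟩
  calc
    m (f v) = g (f v) := LinearMap.congr_fun hm ⟨f v, Submodule.mem_map_of_mem hv⟩
    _ = l v := LinearMap.congr_fun hg ⟨v, hv⟩

end LinearAlgebra

section Exposed

variable {𝕜 E E' : Type*} [TopologicalSpace 𝕜] [AddCommGroup E] [TopologicalSpace E]
  [AddCommGroup E'] [TopologicalSpace E']

section OrderedRing

variable [Ring 𝕜] [PartialOrder 𝕜] [Module 𝕜 E] [Module 𝕜 E'] {A : Set E} {l : StrongDual 𝕜 E}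

theorem vectorSpan_toExposed_le_ker :
    vectorSpan 𝕜 (l.toExposed A) ≤ LinearMap.ker (l : E →ₗ[𝕜] 𝕜) := by
  rw [vectorSpan_def, Submodule.span_le]
  rintro _ ⟨x, ⟨hxA, hx⟩, y, ⟨hyA, hy⟩, rfl⟩
  simpa [sub_eq_zero] using (hy x hxA).antisymm (hx y hyA)

theorem toExposed_eq_self_of_vectorSpan_le_ker
    (h : vectorSpan 𝕜 A ≤ LinearMap.ker (l : E →ₗ[𝕜] 𝕜)) : l.toExposed A = A := by
  refine sep_eq_self_iff_mem_true.2 fun x hx y hy ↦ le_of_eq ?_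
  simpa [sub_eq_zero] using h (vsub_mem_vectorSpan 𝕜 hy hx)

theorem image_toExposed_eq_toExposed_image [IsOrderedAddMonoid 𝕜] {f : E →ₗ[𝕜] E'}
    {m : StrongDual 𝕜 E'} (h : ∀ v ∈ vectorSpan 𝕜 A, m (f v) = l v) :
    f '' l.toExposed A = m.toExposed (f '' A) := by
  have hle {x y : E} (hx : x ∈ A) (hy : y ∈ A) : m (f y) ≤ m (f x) ↔ l y ≤ l x := by
    have hsub : m (f x) - m (f y) = l x - l y := by
      simpa using h _ (vsub_mem_vectorSpan 𝕜 hx hy)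
    rw [← sub_nonneg, hsub, sub_nonneg]
  ext z
  constructor
  · rintro ⟨x, ⟨hx, hmax⟩, rfl⟩
    exact ⟨mem_image_of_mem f hx, forall_mem_image.2 fun y hy ↦ (hle hx hy).2 (hmax y hy)⟩
  · rintro ⟨⟨x, hx, rfl⟩, hmax⟩
    exact ⟨x, ⟨hx, fun y hy ↦ (hle hx hy).1 (hmax _ (mem_image_of_mem f hy))⟩, rfl⟩

end OrderedRing

theorem vectorSpan_toExposed_eq_inf_ker [Field 𝕜] [PartialOrder 𝕜] [Module 𝕜 E]
    {A : Set E} {l : StrongDual 𝕜 E}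
    (h : finrank 𝕜 (vectorSpan 𝕜 (l.toExposed A)) + 1 = finrank 𝕜 (vectorSpan 𝕜 A)) :
    vectorSpan 𝕜 (l.toExposed A) = vectorSpan 𝕜 A ⊓ LinearMap.ker (l : E →ₗ[𝕜] 𝕜) := by
  have : FiniteDimensional 𝕜 (vectorSpan 𝕜 A) := .of_finrank_pos (h ▸ Nat.succ_pos _)
  have hl : ¬vectorSpan 𝕜 A ≤ LinearMap.ker (l : E →ₗ[𝕜] 𝕜) := fun hle ↦ by
    rw [toExposed_eq_self_of_vectorSpan_le_ker hle] at h
    exact Nat.succ_ne_self _ h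
  have hmono : vectorSpan 𝕜 (l.toExposed A) ≤ vectorSpan 𝕜 A := vectorSpan_mono 𝕜 (sep_subset _ _)
  refine Submodule.eq_of_le_of_finrank_eq (le_inf hmono vectorSpan_toExposed_le_ker) ?_
  exact Nat.succ_injective (h.trans (finrank_inf_ker_add_one hl).symm)

end Exposed

theorem polyDim_eq_finrank_vectorSpan {E : Type*} [AddCommGroup E] [Module ℝ E] (P : Set E) :
    polyDim P = finrank ℝ (vectorSpan ℝ P) := by
  rw [polyDim, direction_affineSpan]

theorem polyDim_image {E E' : Type*} [AddCommGroup E] [Module ℝ E] [AddCommGroup E'] [Module ℝ E']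
    (f : E →ₗ[ℝ] E') (P : Set E) : polyDim (f '' P) = finrank ℝ ((vectorSpan ℝ P).map f) := by
  rw [polyDim_eq_finrank_vectorSpan, ← f.coe_toAffineMap, ← AffineMap.map_vectorSpan,
    f.toAffineMap_linear]

theorem facet_projection_dichotomy_general {E E' : Type*}
    [AddCommGroup E] [Module ℝ E] [TopologicalSpace E]
    [AddCommGroup E'] [Module ℝ E'] [TopologicalSpace E'] [SeparatingDual ℝ E']
    (p : E →ₗ[ℝ] E') {P F : Set E} (hF : IsExposed ℝ P F) (hFne : F.Nonempty)
    (hfacet : polyDim F + 1 = polyDim P) :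
    Xor (polyDim (p '' F) = polyDim (p '' P))
      (polyDim (p '' F) + 1 = polyDim (p '' P) ∧ IsExposed ℝ (p '' P) (p '' F)) := by
  obtain ⟨l, rfl⟩ : ∃ l : StrongDual ℝ E, F = l.toExposed P := hF hFne
  simp only [polyDim_image]
  simp only [polyDim_eq_finrank_vectorSpan] at hfacet
  have : FiniteDimensional ℝ (vectorSpan ℝ P) := .of_finrank_pos (hfacet ▸ Nat.succ_pos _)
  have hdir := vectorSpan_toExposed_eq_inf_ker hfacet
  rw [hdir] at hfacet ⊢
  by_cases hker : vectorSpan ℝ P ⊓ p.ker ≤ LinearMap.ker (l : E →ₗ[ℝ] ℝ)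
  · have hl : ¬vectorSpan ℝ P ≤ LinearMap.ker (l : E →ₗ[ℝ] ℝ) := fun hle ↦ by
      rw [inf_eq_left.2 hle] at hfacet
      exact Nat.succ_ne_self _ hfacet
    have hdrop := finrank_map_inf_ker_add_one_of_inf_ker_le hl hker
    obtain ⟨m, hm⟩ := exists_strongDual_comp_eqOn hker
    have hexposed : IsExposed ℝ (p '' P) (p '' l.toExposed P) :=
      image_toExposed_eq_toExposed_image hm ▸ ContinuousLinearMap.toExposed.isExposed
    exact .inr ⟨⟨hdrop, hexposed⟩, by lia⟩
  · have hsame := finrank_map_inf_ker_of_not_inf_ker_le hker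
    exact .inl ⟨hsame, fun h ↦ by lia⟩

/-- Let `P ⊆ ℝⁿ × ℝᵈ` be a polytope and `F` a facet of `P` (a nonempty face of dimension
`dim P - 1`).  Then exactly one of the following holds:
(i) `dim p_x(F) = dim p_x(P)`, or
(ii) `dim p_x(F) = dim p_x(P) - 1` and `p_x(F)` is a face of the polytope `p_x(P)`. -/
theorem facet_projection_dichotomy {n d : ℕ}
    (P F : Set ((Fin n → ℝ) × (Fin d → ℝ)))
    (hP : ∃ s : Set ((Fin n → ℝ) × (Fin d → ℝ)), s.Finite ∧ P = convexHull ℝ s)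
    (hF : IsExposed ℝ P F) (hFne : F.Nonempty)
    (hfacet : polyDim F + 1 = polyDim P) :
    Xor'
      (polyDim (Prod.fst '' F) = polyDim (Prod.fst '' P))
      (polyDim (Prod.fst '' F) + 1 = polyDim (Prod.fst '' P) ∧
        IsExposed ℝ (Prod.fst '' P) (Prod.fst '' F)) :=
  facet_projection_dichotomy_general (LinearMap.fst ℝ (Fin n → ℝ) (Fin d → ℝ)) hF hFne hfacet
end

section
/- Let P ⊆ ℝⁿ × ℝᵈ be a polytope and p_x : ℝⁿ × ℝᵈ → ℝⁿ the projection onto the first n coordinates. The pair (P, p_x) has the PF-property if and only if for every subset S of the vertex set of p_x(P) the equality conv{v ∈ vert(P) : p_x(v) ∈ S} = {v ∈ P : p_x(v) ∈ conv(S)} holds, i.e. p_x⁻¹(conv(S)) ∩ P = conv(p_x⁻¹(S) ∩ vert(P)). -/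
open Set

/-!
For polytopes the exposed faces are exactly the convex extreme subsets: such a subset is cut out of
the polytope by its affine span, and a hyperplane separating this span from the remaining vertices
exposes it. The *minimal face* of `w` in `P` consists of the `x ∈ P` such that the segment from
`x` to `w` can be prolonged beyond `w` inside `P`.

If faces project to faces, let `w` be an extreme point of `R = P ∩ π⁻¹(conv S)`. The minimal face
of `w` in `P` projects to a face of `π(P)`, which meets the minimal face of `π w` in `conv S` in a
face of `conv S` and hence contains some `π u ∈ S`, where `u` lies in the minimal face of `w` in
`P`. Then `u` lies in the minimal face of `w` in `R`, so `u = w`: the extreme points of `R` are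
vertices of `P` over `S`, and the theorem of Krein and Milman applies.

Conversely, let `z` lie in the projection `G` of a face and let `s` be a vertex of the minimal face
of `z` in `π(P)`. Travelling from `s` through `z` as far as possible, one reaches a point whose
minimal face `H` misses `s`. The equality for `S = {s} ∪ vert H` shows `z ∈ conv (S ∩ G)`; as
`z ∉ H`, this forces `s ∈ G`. Hence `G` contains the minimal face of each of its points.
-/

section ExtremeSets

variable {𝕜 E F : Type*} [Ring 𝕜] [PartialOrder 𝕜] [IsOrderedRing 𝕜]
  [AddCommGroup E] [Module 𝕜 E] [AddCommGroup F] [Module 𝕜 F] {G P Q T : Set E}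

theorem convexHull_inter_subset_of_isExtreme (hQ : Convex 𝕜 Q) (hG : IsExtreme 𝕜 Q G)
    (hT : T ⊆ Q) : convexHull 𝕜 T ∩ G ⊆ convexHull 𝕜 (T ∩ G) := by
  have hconv : Convex 𝕜 {x ∈ Q | x ∈ G → x ∈ convexHull 𝕜 (T ∩ G)} := by
    refine convex_iff_openSegment_subset.2 fun x hx y hy z hz =>
      ⟨hQ.openSegment_subset hx.1 hy.1 hz, fun hzG => ?_⟩
    have hxG := hG.left_mem_of_mem_openSegment hx.1 hy.1 hzG hz
    have hyG := hG.right_mem_of_mem_openSegment hx.1 hy.1 hzG hz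
    exact (convex_convexHull 𝕜 _).openSegment_subset (hx.2 hxG) (hy.2 hyG) hz
  have hsub : convexHull 𝕜 T ⊆ {x ∈ Q | x ∈ G → x ∈ convexHull 𝕜 (T ∩ G)} :=
    convexHull_min (fun x hx => ⟨hT hx, fun hxG => subset_convexHull 𝕜 _ ⟨hx, hxG⟩⟩) hconv
  exact fun x hx => (hsub hx.1).2 hx.2

theorem isExtreme_inter_preimage (π : E →ₗ[𝕜] F) {H : Set F} (hH : IsExtreme 𝕜 (π '' P) H) :
    IsExtreme 𝕜 P (P ∩ π ⁻¹' H) := by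
  refine ⟨inter_subset_left, fun x hx y hy z hz hzxy => ⟨hx, ?_⟩⟩
  refine hH.left_mem_of_mem_openSegment (mem_image_of_mem π hx) (mem_image_of_mem π hy) hz.2 ?_
  exact image_openSegment 𝕜 π.toAffineMap x y ▸ mem_image_of_mem π hzxy

theorem convexHull_inter_image_subset_of_isExtreme (π : E →ₗ[𝕜] F) {S : Set F}
    (hP : Convex 𝕜 P) (hG : IsExtreme 𝕜 P G)
    (hS : P ∩ π ⁻¹' convexHull 𝕜 S ⊆ convexHull 𝕜 (P ∩ π ⁻¹' S)) :
    convexHull 𝕜 S ∩ π '' G ⊆ convexHull 𝕜 (S ∩ π '' G) := by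
  rintro _ ⟨hfS, f, hf, rfl⟩
  have hmem : f ∈ convexHull 𝕜 (P ∩ π ⁻¹' S ∩ G) :=
    convexHull_inter_subset_of_isExtreme hP hG inter_subset_left ⟨hS ⟨hG.subset hf, hfS⟩, hf⟩
  have himage : π '' (P ∩ π ⁻¹' S ∩ G) ⊆ S ∩ π '' G := by
    rintro _ ⟨x, ⟨⟨-, hxS⟩, hxG⟩, rfl⟩
    exact ⟨hxS, mem_image_of_mem π hxG⟩
  exact convexHull_mono himage (π.image_convexHull _ ▸ mem_image_of_mem π hmem)

end ExtremeSets

section Spans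

theorem map_eq_of_forall_lt_map {𝕜 E : Type*} [Field 𝕜] [PartialOrder 𝕜] [AddCommGroup E]
    [Module 𝕜 E] (l : E →ₗ[𝕜] 𝕜) {L : AffineSubspace 𝕜 E} {a : 𝕜} (hl : ∀ z ∈ L, a < l z)
    {x y : E} (hx : x ∈ L) (hy : y ∈ L) : l x = l y := by
  by_contra hne
  have hsub : l y - l x ≠ 0 := sub_ne_zero.2 (Ne.symm hne)
  have hlt := hl _ (AffineMap.lineMap_mem ((a - l x) / (l y - l x)) hx hy)
  rw [AffineMap.lineMap_apply_module', map_add, map_smul, map_sub, smul_eq_mul,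
    div_mul_cancel₀ _ hsub, sub_add_cancel] at hlt
  exact hlt.false

variable {𝕜 E : Type*} [Field 𝕜] [LinearOrder 𝕜] [IsStrictOrderedRing 𝕜]
  [AddCommGroup E] [Module 𝕜 E] {A G P : Set E} {x : E}

theorem exists_pos_smul_eq_of_mem_span (hA : Convex 𝕜 A) (hne : A.Nonempty)
    (hneg : ∀ y ∈ A, -y ∈ A) (hx : x ∈ Submodule.span 𝕜 A) :
    ∃ c : 𝕜, 0 < c ∧ ∃ y ∈ A, c • y = x := by
  have hzero : (0 : E) ∈ A := by
    obtain ⟨y, hy⟩ := hne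
    simpa using hA.midpoint_mem hy (hneg y hy)
  let C : PointedCone 𝕜 E :=
    (ConvexCone.hull 𝕜 A).toPointedCone (ConvexCone.subset_hull hzero)
  have hspan : Submodule.span 𝕜 A ≤ C.lineal := Submodule.span_le.2 fun y hy =>
    ⟨ConvexCone.subset_hull hy, ConvexCone.subset_hull (hneg y hy)⟩
  exact (ConvexCone.mem_hull_of_convex hA).1 (hspan hx).1

open scoped Pointwise in
theorem inter_affineSpan_subset_of_isExtreme (hG : IsExtreme 𝕜 P G) (hGc : Convex 𝕜 G) :
    P ∩ affineSpan 𝕜 G ⊆ G := by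
  rintro x ⟨hxP, hx⟩
  obtain ⟨g, hg⟩ : G.Nonempty := (affineSpan_nonempty (k := 𝕜)).1 ⟨x, hx⟩
  have hspan : x - g ∈ Submodule.span 𝕜 (G - G) := by
    have hdir := AffineSubspace.vsub_mem_direction hx (subset_affineSpan 𝕜 G hg)
    rw [direction_affineSpan] at hdir
    exact hdir
  have hneg : ∀ y ∈ G - G, -y ∈ G - G := by
    rintro _ ⟨y, hy, z, hz, rfl⟩
    exact ⟨z, hz, y, hy, (neg_sub y z).symm⟩
  obtain ⟨c, hc, _, ⟨y, hy, z, hz, rfl⟩, hcyz⟩ :=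
    exists_pos_smul_eq_of_mem_span (hGc.sub hGc) ⟨g - g, g, hg, g, hg, rfl⟩ hneg hspan
  have hmem : (1 / (1 + c)) • g + (c / (1 + c)) • y ∈ G :=
    hGc hg hy (by positivity) (by positivity) (by field_simp)
  refine hG.left_mem_of_mem_openSegment hxP (hG.subset hz) hmem
    ⟨1 / (1 + c), c / (1 + c), by positivity, by positivity, by field_simp, ?_⟩
  obtain rfl : x = g + c • (y - z) := by rw [← sub_eq_iff_eq_add', ← hcyz]
  module

end Spans

section MinimalFace

section

variable {𝕜 E : Type*} [Semiring 𝕜] [PartialOrder 𝕜] [AddCommMonoid E] [SMul 𝕜 E]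

variable (𝕜) in
/-- The smallest face of a convex set `P` containing the point `w ∈ P`, described as the set of all
`x ∈ P` such that the segment from `x` to `w` can be prolonged beyond `w` inside `P`. -/
def minimalFace (P : Set E) (w : E) : Set E :=
  {x ∈ P | ∃ y ∈ P, w ∈ openSegment 𝕜 x y}

theorem minimalFace_subset {P : Set E} {w : E} : minimalFace 𝕜 P w ⊆ P :=
  fun _ hx => hx.1

end

variable {𝕜 E F : Type*} [Field 𝕜] [LinearOrder 𝕜] [IsStrictOrderedRing 𝕜]
  [AddCommGroup E] [Module 𝕜 E] [AddCommGroup F] [Module 𝕜 F] {P : Set E} {w x : E}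

theorem self_mem_minimalFace (hw : w ∈ P) : w ∈ minimalFace 𝕜 P w :=
  ⟨hw, w, hw, by simp⟩

theorem isExtreme_minimalFace (hP : Convex 𝕜 P) : IsExtreme 𝕜 P (minimalFace 𝕜 P w) := by
  refine ⟨minimalFace_subset, ?_⟩
  rintro x hx y hy _ ⟨-, z, hz, a, b, ha, hb, hab, rfl⟩ ⟨c, d, hc, hd, hcd, rfl⟩
  refine ⟨hx, (a * d / (a * d + b)) • y + (b / (a * d + b)) • z,
    hP hy hz (by positivity) (by positivity) (by field_simp), a * c, a * d + b, by positivity,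
    by positivity, by linear_combination a * hcd + hab, ?_⟩
  match_scalars <;> field_simp

theorem mem_minimalFace_iff_exists_add_smul_mem :
    x ∈ minimalFace 𝕜 P w ↔ x ∈ P ∧ ∃ ε : 𝕜, 0 < ε ∧ w + ε • (w - x) ∈ P := by
  refine and_congr_right fun _ => ⟨?_, ?_⟩
  · rintro ⟨y, hy, a, b, ha, hb, hab, rfl⟩
    refine ⟨a / b, div_pos ha hb, ?_⟩
    obtain rfl : a = 1 - b := eq_sub_of_add_eq hab
    convert hy using 1
    match_scalars <;> field_simp <;> ring
  · rintro ⟨ε, hε, hy⟩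
    refine ⟨_, hy, ε / (1 + ε), 1 / (1 + ε), by positivity, by positivity, by field_simp; ring, ?_⟩
    match_scalars
    · field_simp
      ring
    · field_simp

theorem exists_forall_add_smul_mem_of_mem_minimalFace (hP : Convex 𝕜 P)
    (hx : x ∈ minimalFace 𝕜 P w) :
    ∃ ε : 𝕜, 0 < ε ∧ ∀ δ ∈ Icc 0 ε, w + δ • (w - x) ∈ P := by
  obtain ⟨-, ε, hε, hmem⟩ := mem_minimalFace_iff_exists_add_smul_mem.1 hx
  obtain ⟨hxP, y, hy, hw⟩ := hx
  refine ⟨ε, hε, fun δ hδ => ?_⟩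
  have hδε : δ / ε ∈ Icc 0 1 := ⟨div_nonneg hδ.1 hε.le, (div_le_one hε).2 hδ.2⟩
  simpa [smul_smul, hε.ne'] using hP.add_smul_mem (hP.openSegment_subset hxP hy hw) hmem hδε

theorem convex_minimalFace (hP : Convex 𝕜 P) : Convex 𝕜 (minimalFace 𝕜 P w) := by
  intro x hx y hy a b ha hb hab
  obtain ⟨ε, hε, hεx⟩ := exists_forall_add_smul_mem_of_mem_minimalFace hP hx
  obtain ⟨δ, hδ, hδy⟩ := exists_forall_add_smul_mem_of_mem_minimalFace hP hy
  have hmin : 0 < min ε δ := lt_min hε hδ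
  refine mem_minimalFace_iff_exists_add_smul_mem.2 ⟨hP hx.1 hy.1 ha hb hab, min ε δ, hmin, ?_⟩
  have hεx := hεx _ ⟨hmin.le, min_le_left _ _⟩
  have hδy := hδy _ ⟨hmin.le, min_le_right _ _⟩
  convert hP hεx hδy ha hb hab using 1
  obtain rfl : a = 1 - b := eq_sub_of_add_eq hab
  module

theorem minimalFace_inter_preimage (π : E →ₗ[𝕜] F) {C : Set F} (hP : Convex 𝕜 P)
    (hC : Convex 𝕜 C) :
    minimalFace 𝕜 (P ∩ π ⁻¹' C) w = minimalFace 𝕜 P w ∩ π ⁻¹' minimalFace 𝕜 C (π w) := by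
  refine Subset.antisymm ?_ ?_
  · rintro x ⟨⟨hxP, hxC⟩, y, ⟨hyP, hyC⟩, hw⟩
    refine ⟨⟨hxP, y, hyP, hw⟩, hxC, π y, hyC, ?_⟩
    exact image_openSegment 𝕜 π.toAffineMap x y ▸ mem_image_of_mem π hw
  · rintro x ⟨hxP, hxC⟩
    obtain ⟨ε, hε, hεP⟩ := exists_forall_add_smul_mem_of_mem_minimalFace hP hxP
    obtain ⟨δ, hδ, hδC⟩ := exists_forall_add_smul_mem_of_mem_minimalFace hC hxC
    have hmin : 0 < min ε δ := lt_min hε hδ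
    refine mem_minimalFace_iff_exists_add_smul_mem.2 ⟨⟨hxP.1, hxC.1⟩, min ε δ, hmin,
      hεP _ ⟨hmin.le, min_le_left _ _⟩, ?_⟩
    simpa using hδC _ ⟨hmin.le, min_le_right _ _⟩

end MinimalFace

section Polytopes

variable {E : Type*} [AddCommGroup E] [Module ℝ E] [TopologicalSpace E] [T2Space E]
  [IsTopologicalAddGroup E] [ContinuousSMul ℝ E] {G K Q V : Set E} {s z : E}

theorem exists_mem_openSegment_notMem_minimalFace (hQ : IsCompact Q) (hs : s ∈ minimalFace ℝ Q z)
    (hsz : s ≠ z) : ∃ y ∈ Q, z ∈ openSegment ℝ s y ∧ s ∉ minimalFace ℝ Q y := by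
  let K : Set (ℝ × E) := (Icc 0 1 ×ˢ Q) ∩ {p | s + p.1 • (p.2 - s) = z}
  have hK : IsCompact K :=
    (isCompact_Icc.prod hQ).inter_right (isClosed_eq (by fun_prop) continuous_const)
  obtain ⟨y₀, hy₀, a₀, τ₀, ha₀, hτ₀, haτ₀, hz₀⟩ := hs.2
  have hmem₀ : (τ₀, y₀) ∈ K := by
    refine ⟨⟨⟨hτ₀.le, by linarith⟩, hy₀⟩, ?_⟩
    obtain rfl : a₀ = 1 - τ₀ := eq_sub_of_add_eq haτ₀
    rw [mem_ofPred_eq, ← hz₀]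
    module
  -- The end point travelled to farthest is the one for which `z` has the least relative position.
  obtain ⟨⟨τ, y⟩, ⟨⟨⟨hτ_nonneg, -⟩, hy⟩, hz⟩, hmin⟩ :=
    hK.exists_isMinOn ⟨_, hmem₀⟩ continuousOn_fst
  have hz : s + τ • (y - s) = z := hz
  have hτ_pos : 0 < τ := hτ_nonneg.lt_of_ne (by rintro rfl; simp [hsz] at hz)
  have hτ_lt_one : τ < 1 := (show τ ≤ τ₀ from hmin hmem₀).trans_lt (by linarith)
  refine ⟨y, hy, ⟨1 - τ, τ, by linarith, hτ_pos, by ring, by rw [← hz]; module⟩, fun hsy => ?_⟩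
  obtain ⟨-, ε, hε, hmem⟩ := mem_minimalFace_iff_exists_add_smul_mem.1 hsy
  have hlt : τ / (1 + ε) < τ := div_lt_self hτ_pos (by linarith)
  have hmemK : (τ / (1 + ε), y + ε • (y - s)) ∈ K := by
    refine ⟨⟨⟨by positivity, by linarith⟩, hmem⟩, ?_⟩
    rw [mem_ofPred_eq, ← hz]
    match_scalars <;> field_simp
    ring
  exact hlt.not_ge (hmin hmemK)

theorem isExtreme_of_forall_convexHull_inter_subset (hQ : IsCompact Q) (hQc : Convex ℝ Q)
    (hvert : convexHull ℝ (Q.extremePoints ℝ) = Q) (hGQ : G ⊆ Q) (hGc : Convex ℝ G)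
    (h : ∀ S ⊆ Q.extremePoints ℝ, convexHull ℝ S ∩ G ⊆ convexHull ℝ (S ∩ G)) :
    IsExtreme ℝ Q G := by
  have hface : ∀ w, minimalFace ℝ Q w ⊆ convexHull ℝ (Q.extremePoints ℝ ∩ minimalFace ℝ Q w) :=
    fun w x hx => convexHull_inter_subset_of_isExtreme hQc (isExtreme_minimalFace hQc)
      extremePoints_subset ⟨hvert.symm ▸ hx.1, hx⟩
  have hvertex : ∀ z ∈ G, Q.extremePoints ℝ ∩ minimalFace ℝ Q z ⊆ G := by
    rintro z hz s ⟨hs, hsz⟩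
    by_contra hsG
    obtain ⟨y, hy, hzsy, hsy⟩ := exists_mem_openSegment_notMem_minimalFace hQ hsz
      (by rintro rfl; exact hsG hz)
    have hH : IsExtreme ℝ Q (minimalFace ℝ Q y) := isExtreme_minimalFace hQc
    set S := insert s (Q.extremePoints ℝ ∩ minimalFace ℝ Q y) with hS
    have hzS : z ∈ convexHull ℝ S :=
      (convex_convexHull ℝ S).openSegment_subset (subset_convexHull ℝ S (mem_insert s _))
        (convexHull_mono (subset_insert s _) (hface y (self_mem_minimalFace hy))) hzsy
    have hzH : z ∈ minimalFace ℝ Q y := by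
      have hSG : S ∩ G ⊆ minimalFace ℝ Q y := by
        rintro t ⟨rfl | ht, htG⟩
        · exact absurd htG hsG
        · exact ht.2
      exact convexHull_min hSG (convex_minimalFace hQc)
        (h S (insert_subset hs inter_subset_left) ⟨hzS, hz⟩)
    exact hsy (hH.left_mem_of_mem_openSegment hs.1 hy hzH hzsy)
  refine ⟨hGQ, fun x hx y hy z hz hzxy => ?_⟩
  exact convexHull_min (hvertex z hz) hGc (hface z ⟨hx, y, hy, hzxy⟩)

variable [LocallyConvexSpace ℝ E]

theorem convexHull_extremePoints_of_finite (hK : IsCompact K) (hKc : Convex ℝ K)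
    (hfin : (K.extremePoints ℝ).Finite) : convexHull ℝ (K.extremePoints ℝ) = K := by
  rw [← (hfin.isClosed_convexHull ℝ).closure_eq, closure_convexHull_extremePoints hK hKc]

theorem exists_dual_eq_and_lt_of_isExtreme (hV : V.Finite)
    (hG : IsExtreme ℝ (convexHull ℝ V) G) (hGc : Convex ℝ G) {g : E} (hg : g ∈ G) :
    ∃ l : StrongDual ℝ E, (∀ x ∈ G, l x = l g) ∧ ∀ x ∈ V \ G, l x < l g := by
  have hG_hull : G ⊆ convexHull ℝ (V ∩ G) := fun x hx =>
    convexHull_inter_subset_of_isExtreme (convex_convexHull ℝ V) hG (subset_convexHull ℝ V)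
      ⟨hG.subset hx, hx⟩
  have hspan : affineSpan ℝ G = affineSpan ℝ (V ∩ G) :=
    (affineSpan_le.2 (hG_hull.trans (convexHull_subset_affineSpan _))).antisymm
      (affineSpan_mono ℝ inter_subset_right)
  have hclosed : IsClosed (affineSpan ℝ G : Set E) := by
    have := finiteDimensional_direction_affineSpan_of_finite ℝ (hV.inter_of_left G)
    rw [hspan, ← AffineSubspace.isClosed_direction_iff]
    exact Submodule.closed_of_finiteDimensional _
  have hdisj : Disjoint (convexHull ℝ (V \ G)) (affineSpan ℝ G : Set E) := by
    refine disjoint_left.2 fun x hx hxG => ?_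
    have hx_diff : x ∈ convexHull ℝ V \ G :=
      convexHull_min (sdiff_subset_sdiff_left (subset_convexHull ℝ V))
        (hG.convex_sdiff (convex_convexHull ℝ V)) hx
    exact hx_diff.2 (inter_affineSpan_subset_of_isExtreme hG hGc ⟨hx_diff.1, hxG⟩)
  obtain ⟨l, a, b, hla, hab, hlb⟩ := geometric_hahn_banach_compact_closed
    (convex_convexHull ℝ _) (hV.sdiff.isCompact_convexHull ℝ) (affineSpan ℝ G).convex hclosed hdisj
  refine ⟨l, fun x hx => ?_, fun x hx => ?_⟩
  · exact map_eq_of_forall_lt_map (l : E →ₗ[ℝ] ℝ) hlb (subset_affineSpan ℝ G hx)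
      (subset_affineSpan ℝ G hg)
  · exact (hla x (subset_convexHull ℝ _ hx)).trans
      (hab.trans (hlb g (subset_affineSpan ℝ G hg)))

theorem isExposed_convexHull_iff (hV : V.Finite) :
    IsExposed ℝ (convexHull ℝ V) G ↔ IsExtreme ℝ (convexHull ℝ V) G ∧ Convex ℝ G := by
  refine ⟨fun hG => ⟨hG.isExtreme, hG.convex (convex_convexHull ℝ V)⟩, ?_⟩
  rintro ⟨hG, hGc⟩ ⟨g, hg⟩
  obtain ⟨l, hl_eq, hl_lt⟩ := exists_dual_eq_and_lt_of_isExtreme hV hG hGc hg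
  have hl_le : ∀ x ∈ convexHull ℝ V, l x ≤ l g := by
    refine convexHull_min (fun x hx => ?_) (convex_halfSpace_le l.toLinearMap.isLinear (l g))
    by_cases hxG : x ∈ G
    · exact (hl_eq x hxG).le
    · exact (hl_lt x ⟨hx, hxG⟩).le
  have hmax : l.toExposed (convexHull ℝ V) ⊆ G := by
    have hvert : V ∩ l.toExposed (convexHull ℝ V) ⊆ G := by
      rintro x ⟨hx, -, hx_max⟩
      by_contra hxG
      exact (hl_lt x ⟨hx, hxG⟩).not_ge (hx_max g (hG.subset hg))
    exact fun x hx => convexHull_min hvert hGc (convexHull_inter_subset_of_isExtreme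
      (convex_convexHull ℝ V) ContinuousLinearMap.toExposed.isExposed.isExtreme
      (subset_convexHull ℝ V) ⟨hx.1, hx⟩)
  exact ⟨l, Subset.antisymm
    (fun x hx => ⟨hG.subset hx, fun y hy => (hl_le y hy).trans_eq (hl_eq x hx).symm⟩) hmax⟩

end Polytopes

section ProjectedFaces

variable {𝕜 E F : Type*} [Field 𝕜] [LinearOrder 𝕜] [IsStrictOrderedRing 𝕜]
  [AddCommGroup E] [Module 𝕜 E] [AddCommGroup F] [Module 𝕜 F]
  {P : Set E} {S : Set F} {w : E} (π : E →ₗ[𝕜] F)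

theorem exists_mem_minimalFace_map_mem (hP : Convex 𝕜 P) (hw : w ∈ P)
    (hface : IsExtreme 𝕜 (π '' P) (π '' minimalFace 𝕜 P w)) (hS : S ⊆ π '' P)
    (hwS : π w ∈ convexHull 𝕜 S) :
    ∃ u ∈ minimalFace 𝕜 P w, π u ∈ S ∧ π u ∈ minimalFace 𝕜 (convexHull 𝕜 S) (π w) := by
  set C := convexHull 𝕜 S
  set H := minimalFace 𝕜 C (π w) ∩ π '' minimalFace 𝕜 P w
  have hC : Convex 𝕜 C := convex_convexHull 𝕜 S
  have hCP : C ⊆ π '' P := convexHull_min hS (hP.linear_image π)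
  have hextreme : IsExtreme 𝕜 C H :=
    ⟨fun x hx => hx.1.1, fun x hx y hy z hz hzxy =>
      ⟨(isExtreme_minimalFace hC).left_mem_of_mem_openSegment hx hy hz.1 hzxy,
        hface.left_mem_of_mem_openSegment (hCP hx) (hCP hy) hz.2 hzxy⟩⟩
  have hwH : π w ∈ H :=
    ⟨self_mem_minimalFace hwS, mem_image_of_mem π (self_mem_minimalFace hw)⟩
  have hmem : π w ∈ convexHull 𝕜 (S ∩ H) :=
    convexHull_inter_subset_of_isExtreme hC hextreme (subset_convexHull 𝕜 S) ⟨hwS, hwH⟩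
  obtain ⟨_, huS, hmin, u, hu, rfl⟩ := convexHull_nonempty_iff.1 ⟨_, hmem⟩
  exact ⟨u, hu, huS, hmin⟩

theorem extremePoints_inter_preimage_convexHull_subset (hP : Convex 𝕜 P)
    (hface : ∀ G, IsExtreme 𝕜 P G → Convex 𝕜 G → IsExtreme 𝕜 (π '' P) (π '' G))
    (hS : S ⊆ (π '' P).extremePoints 𝕜) :
    (P ∩ π ⁻¹' convexHull 𝕜 S).extremePoints 𝕜 ⊆ P.extremePoints 𝕜 ∩ π ⁻¹' S := by
  intro w hw
  obtain ⟨u, huP, huS, hu⟩ := exists_mem_minimalFace_map_mem π hP hw.1.1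
    (hface _ (isExtreme_minimalFace hP) (convex_minimalFace hP))
    (hS.trans extremePoints_subset) hw.1.2
  have huw : u ∈ minimalFace 𝕜 (P ∩ π ⁻¹' convexHull 𝕜 S) w := by
    rw [minimalFace_inter_preimage π hP (convex_convexHull 𝕜 S)]
    exact ⟨huP, hu⟩
  obtain ⟨huR, y, hy, hwy⟩ := huw
  obtain rfl : u = w := hw.2 huR hy hwy
  have hfiber : IsExtreme 𝕜 P (P ∩ π ⁻¹' {π u}) :=
    isExtreme_inter_preimage π (isExtreme_singleton.2 (hS huS))
  have hsub : P ∩ π ⁻¹' {π u} ⊆ P ∩ π ⁻¹' convexHull 𝕜 S :=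
    inter_subset_inter_right P
      (preimage_mono (singleton_subset_iff.2 (subset_convexHull 𝕜 S huS)))
  exact ⟨hfiber.extremePoints_subset_extremePoints
    (inter_extremePoints_subset_extremePoints_of_subset hsub ⟨⟨hw.1.1, rfl⟩, hw⟩), huS⟩

end ProjectedFaces

section Projections

variable {E F : Type*} [AddCommGroup E] [Module ℝ E] [TopologicalSpace E]
  [AddCommGroup F] [Module ℝ F] [TopologicalSpace F] {P V : Set E} (π : E →L[ℝ] F)

/-- The projected faces property (PF-property) of the pair `(P, π)`: every face of `P` projects to a
face of `π(P)`. A face is an exposed face or the empty set. -/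
def HasProjectedFacesProperty (P : Set E) : Prop :=
  ∀ G, IsExposed ℝ P G → IsExposed ℝ (π '' P) (π '' G)

variable [T2Space F] [IsTopologicalAddGroup F] [ContinuousSMul ℝ F]

theorem isExtreme_image_of_forall_inter_preimage_convexHull {G : Set E} (hP : IsCompact P)
    (hPc : Convex ℝ P) (hvert : convexHull ℝ ((π '' P).extremePoints ℝ) = π '' P)
    (hG : IsExtreme ℝ P G) (hGc : Convex ℝ G)
    (h : ∀ S ⊆ (π '' P).extremePoints ℝ,
      P ∩ π ⁻¹' convexHull ℝ S ⊆ convexHull ℝ (P ∩ π ⁻¹' S)) :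
    IsExtreme ℝ (π '' P) (π '' G) :=
  isExtreme_of_forall_convexHull_inter_subset (hP.image π.continuous)
    (hPc.linear_image π.toLinearMap) hvert (image_mono hG.subset) (hGc.linear_image π.toLinearMap)
    fun S hS => convexHull_inter_image_subset_of_isExtreme π.toLinearMap hPc hG (h S hS)

variable [T2Space E] [IsTopologicalAddGroup E] [ContinuousSMul ℝ E] [LocallyConvexSpace ℝ E]

theorem convexHull_extremePoints_inter_preimage (hP : IsCompact P) (hPc : Convex ℝ P)
    (hfin : (P.extremePoints ℝ).Finite) {S : Set F} (hS : S ⊆ (π '' P).extremePoints ℝ)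
    (hSfin : S.Finite)
    (hface : ∀ G, IsExtreme ℝ P G → Convex ℝ G → IsExtreme ℝ (π '' P) (π '' G)) :
    convexHull ℝ (P.extremePoints ℝ ∩ π ⁻¹' S) = P ∩ π ⁻¹' convexHull ℝ S := by
  have hvert : (P ∩ π ⁻¹' convexHull ℝ S).extremePoints ℝ ⊆ P.extremePoints ℝ ∩ π ⁻¹' S :=
    extremePoints_inter_preimage_convexHull_subset π.toLinearMap hPc hface hS
  have hR : IsCompact (P ∩ π ⁻¹' convexHull ℝ S) :=
    hP.inter_right ((hSfin.isClosed_convexHull ℝ).preimage π.continuous)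
  have hRc : Convex ℝ (P ∩ π ⁻¹' convexHull ℝ S) :=
    hPc.inter ((convex_convexHull ℝ S).linear_preimage π.toLinearMap)
  refine (convexHull_min ?_ hRc).antisymm ?_
  · exact inter_subset_inter extremePoints_subset (preimage_mono (subset_convexHull ℝ S))
  · rw [← convexHull_extremePoints_of_finite hR hRc
      (hfin.subset (hvert.trans inter_subset_left))]
    exact convexHull_mono hvert

variable [LocallyConvexSpace ℝ F]

theorem hasProjectedFacesProperty_convexHull_iff (hV : V.Finite) :
    HasProjectedFacesProperty π (convexHull ℝ V) ↔
      ∀ G, IsExtreme ℝ (convexHull ℝ V) G → Convex ℝ G →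
        IsExtreme ℝ (π '' convexHull ℝ V) (π '' G) := by
  have himage : π '' convexHull ℝ V = convexHull ℝ (π '' V) := π.toLinearMap.image_convexHull V
  simp only [HasProjectedFacesProperty, himage, isExposed_convexHull_iff hV,
    isExposed_convexHull_iff (hV.image π), and_imp]
  exact forall₃_congr fun G _ hGc => and_iff_left (hGc.linear_image π.toLinearMap)

theorem pf_property_iff_vertex_subsets_general (hP : ∃ s : Set E, s.Finite ∧ P = convexHull ℝ s) :
    HasProjectedFacesProperty π P ↔ ∀ S ⊆ (π '' P).extremePoints ℝ,
      convexHull ℝ (P.extremePoints ℝ ∩ π ⁻¹' S) = P ∩ π ⁻¹' convexHull ℝ S := by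
  obtain ⟨V, hV, rfl⟩ := hP
  have hcompact : IsCompact (convexHull ℝ V) := hV.isCompact_convexHull ℝ
  have hconvex : Convex ℝ (convexHull ℝ V) := convex_convexHull ℝ V
  have hfin : ((π '' convexHull ℝ V).extremePoints ℝ).Finite := by
    refine (hV.image π).subset ?_
    rw [show π '' convexHull ℝ V = _ from π.toLinearMap.image_convexHull V]
    exact extremePoints_convexHull_subset
  rw [hasProjectedFacesProperty_convexHull_iff π hV]
  refine ⟨fun hface S hS => ?_, fun h G hG hGc => ?_⟩
  · exact convexHull_extremePoints_inter_preimage π hcompact hconvex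
      (hV.subset extremePoints_convexHull_subset) hS (hfin.subset hS) hface
  · have hvert := convexHull_extremePoints_of_finite (hcompact.image π.continuous)
      (hconvex.linear_image π.toLinearMap) hfin
    exact isExtreme_image_of_forall_inter_preimage_convexHull π hcompact hconvex hvert hG hGc
      fun S hS => (h S hS).ge.trans
        (convexHull_mono (inter_subset_inter_left _ extremePoints_subset))

end Projections

/-- Theorem 2 (characterization of the PF-property): a polytope `P ⊆ ℝⁿ × ℝᵈ` together with the
projection `p_x` onto the first `n` coordinates has the projected faces property (every face of
`P` projects to a face of `p_x(P)`) if and only if for every subset `S` of the vertex set of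
`p_x(P)` one has `conv{v ∈ vert(P) : p_x(v) ∈ S} = {v ∈ P : p_x(v) ∈ conv(S)}`. -/
theorem pf_property_iff_vertex_subsets {n d : ℕ}
    (P : Set ((Fin n → ℝ) × (Fin d → ℝ)))
    (hP : ∃ s : Set ((Fin n → ℝ) × (Fin d → ℝ)), s.Finite ∧ P = convexHull ℝ s) :
    (∀ F : Set ((Fin n → ℝ) × (Fin d → ℝ)),
        IsExposed ℝ P F → IsExposed ℝ (Prod.fst '' P) (Prod.fst '' F)) ↔
      (∀ S : Set (Fin n → ℝ), S ⊆ Set.extremePoints ℝ (Prod.fst '' P) →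
        convexHull ℝ {v ∈ Set.extremePoints ℝ P | v.1 ∈ S} =
          {v ∈ P | v.1 ∈ convexHull ℝ S}) := by
  exact pf_property_iff_vertex_subsets_general (ContinuousLinearMap.fst ℝ _ _) hP
end

section
/- Let P ⊆ ℝⁿ × ℝᵈ be a polytope such that the pair (P, p_x) has the PF-property. Then for every subset S of the vertex set of p_x(P), the pair (P ∩ p_x⁻¹(conv(S)), p_x) also has the PF-property. -/
open Set

/-!
For a functional `l`, let `f x` be the maximum of `l` over the fibre of `P` above `x`, a concave
function on `π '' P`. At a relative interior point `z` it has an affine majorant `α + c`, with `α`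
linear, that is exact at `z`. The face of `P` on which `l - α ∘ π` is maximal then meets the fibre
above `z`, so its projection, being a face of `π '' P` through a relative interior point, is all of
`π '' P`; that is, `f = α + c` everywhere. Conversely, if `f = α + c` for some `α` and `c`, then the
face of `P` maximising `l` projects onto the face of `π '' P` maximising `α`. That every `f` is
affine only concerns the fibres one by one, so it survives intersecting `P` with the preimage of any
set.
-/

section RelativeInterior

variable {E : Type*} [AddCommGroup E] [Module ℝ E] [TopologicalSpace E] [ContinuousAdd E]
  [ContinuousSMul ℝ E]

theorem exists_pos_add_smul_mem_of_mem_intrinsicInterior {K : Set E} {z v : E}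
    (hz : z ∈ intrinsicInterior ℝ K) (hv : v ∈ vectorSpan ℝ K) :
    ∃ t : ℝ, 0 < t ∧ z + t • v ∈ K := by
  obtain ⟨z, hz, rfl⟩ := hz
  have hline (t : ℝ) : (z : E) + t • v ∈ affineSpan ℝ K := by
    rw [add_comm, ← vadd_eq_add]
    refine AffineSubspace.vadd_mem_of_mem_direction ?_ z.2
    rw [direction_affineSpan]
    exact Submodule.smul_mem _ t hv
  let γ : ℝ → affineSpan ℝ K := fun t ↦ ⟨(z : E) + t • v, hline t⟩
  have hγ : Continuous γ := by fun_prop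
  have hγ₀ : γ 0 = z := by simp [γ]
  have hnear : γ ⁻¹' (Subtype.val ⁻¹' K) ∈ nhds 0 :=
    hγ.continuousAt.preimage_mem_nhds (hγ₀.symm ▸ mem_interior_iff_mem_nhds.1 hz)
  obtain ⟨ε, hε, hball⟩ := Metric.mem_nhds_iff.1 hnear
  refine ⟨ε / 2, by positivity, hball ?_⟩
  rw [Metric.mem_ball, Real.dist_0_eq_abs, abs_of_pos (by positivity)]
  exact half_lt_self hε

theorem eq_of_isExtreme_of_mem_intrinsicInterior {K G : Set E} {z : E}
    (hG : IsExtreme ℝ K G) (hzG : z ∈ G) (hz : z ∈ intrinsicInterior ℝ K) : G = K := by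
  refine hG.subset.antisymm fun x hx ↦ ?_
  obtain ⟨t, ht, hy⟩ := exists_pos_add_smul_mem_of_mem_intrinsicInterior hz
    (vsub_mem_vectorSpan ℝ (hG.subset hzG) hx)
  refine hG.left_mem_of_mem_openSegment hx hy hzG
    ⟨t / (1 + t), 1 / (1 + t), by positivity, by positivity, by field_simp; ring, ?_⟩
  rw [vsub_eq_sub]
  match_scalars
  · field_simp
    ring
  · field_simp

end RelativeInterior

section SupportingFunctional

variable {E : Type*} [AddCommGroup E] [Module ℝ E]

theorem exists_linearMap_forall_snd_le_of_fst_image_eq (s : PointedCone ℝ (E × ℝ))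
    (V : Submodule ℝ E) (hV : Prod.fst '' (s : Set (E × ℝ)) = V)
    (hs : ∀ r : ℝ, ((0 : E), r) ∈ s → r ≤ 0) :
    ∃ α : E →ₗ[ℝ] ℝ, ∀ q ∈ s, q.2 ≤ α q.1 := by
  obtain ⟨W, hVW⟩ := V.exists_isCompl
  have hsV {q : E × ℝ} (hq : q ∈ s) : q.1 ∈ V := by
    rw [← SetLike.mem_coe, ← hV]
    exact mem_image_of_mem _ hq
  -- The height `-r`, prescribed on `W × ℝ`, extends to a functional nonnegative on `s`.
  obtain ⟨g, hg, hg_nonneg⟩ := riesz_extension s ((-LinearMap.snd ℝ E ℝ).toPMap (W.prod ⊤))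
    (by
      rintro ⟨⟨w, r⟩, hw, _⟩ hws
      have hw₀ : w = 0 := Submodule.disjoint_def.1 hVW.disjoint w (hsV hws) hw
      subst hw₀
      simpa using hs r hws)
    (by
      rintro ⟨x, ρ⟩
      obtain ⟨v, hv, w, hw, rfl⟩ : ∃ v ∈ V, ∃ w ∈ W, v + w = x :=
        Submodule.mem_sup.1 (hVW.sup_eq_top ▸ Submodule.mem_top)
      obtain ⟨⟨v, r⟩, hvs, rfl⟩ : v ∈ Prod.fst '' (s : Set (E × ℝ)) := hV ▸ hv
      exact ⟨⟨(-w, r - ρ), W.neg_mem hw, trivial⟩, by simpa using hvs⟩)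
  have hg_vertical (r : ℝ) : g (0, r) = -r := hg ⟨(0, r), W.zero_mem, trivial⟩
  refine ⟨g ∘ₗ LinearMap.inl ℝ E ℝ, fun q hq ↦ ?_⟩
  have hsplit : g q = g (q.1, 0) + g (0, q.2) := by simp [← map_add]
  have hgq : 0 ≤ g (q.1, 0) - q.2 := by
    simpa only [hsplit, hg_vertical, ← sub_eq_add_neg] using hg_nonneg q hq
  exact sub_nonneg.1 hgq

theorem exists_linearMap_snd_sub_le_of_mem_intrinsicInterior [TopologicalSpace E]
    [ContinuousAdd E] [ContinuousSMul ℝ E] {C : Set (E × ℝ)} (hC : Convex ℝ C) {p : E × ℝ}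
    (hpC : p ∈ C) (hp : p.1 ∈ intrinsicInterior ℝ (Prod.fst '' C))
    (hmax : ∀ q ∈ C, q.1 = p.1 → q.2 ≤ p.2) :
    ∃ α : E →ₗ[ℝ] ℝ, ∀ q ∈ C, q.2 - α q.1 ≤ p.2 - α p.1 := by
  let D : Set (E × ℝ) := (· + p) ⁻¹' C
  have hD : Convex ℝ D := hC.translate_preimage_left p
  have hsubD {q : E × ℝ} (hq : q ∈ C) : q - p ∈ D := by simpa [D] using hq
  have hpointed : (ConvexCone.hull ℝ D).Pointed := ConvexCone.subset_hull (by simpa [D] using hpC)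
  have hfst : Prod.fst '' (ConvexCone.hull ℝ D : Set (E × ℝ)) = vectorSpan ℝ (Prod.fst '' C) := by
    ext v
    constructor
    · rintro ⟨_, hq, rfl⟩
      obtain ⟨t, -, y, hy, rfl⟩ := (ConvexCone.mem_hull_of_convex hD).1 hq
      refine Submodule.smul_mem _ t ?_
      simpa using vsub_mem_vectorSpan ℝ (mem_image_of_mem Prod.fst (show y + p ∈ C from hy))
        (mem_image_of_mem Prod.fst hpC)
    · intro hv
      obtain ⟨t, ht, q, hq, hqv⟩ := exists_pos_add_smul_mem_of_mem_intrinsicInterior hp hv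
      refine ⟨t⁻¹ • (q - p), (ConvexCone.hull ℝ D).smul_mem (inv_pos.2 ht)
        (ConvexCone.subset_hull (hsubD hq)), ?_⟩
      simp [hqv, smul_smul, ht.ne']
  have hvertical (r : ℝ) (hr : ((0 : E), r) ∈ ConvexCone.hull ℝ D) : r ≤ 0 := by
    obtain ⟨t, ht, y, hy, hyr⟩ := (ConvexCone.mem_hull_of_convex hD).1 hr
    obtain ⟨hy₁, rfl⟩ : y.1 = 0 ∧ t * y.2 = r := by simpa [Prod.ext_iff, ht.ne'] using hyr
    have hy₂ : y.2 + p.2 ≤ p.2 := hmax (y + p) hy (by simp [hy₁])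
    exact mul_nonpos_of_nonneg_of_nonpos ht.le (by linarith)
  obtain ⟨α, hα⟩ := exists_linearMap_forall_snd_le_of_fst_image_eq
    ((ConvexCone.hull ℝ D).toPointedCone hpointed) _ hfst hvertical
  refine ⟨α, fun q hq ↦ ?_⟩
  have hαq : (q - p).2 ≤ α (q - p).1 := hα _ (ConvexCone.subset_hull (hsubD hq))
  rw [Prod.snd_sub, Prod.fst_sub, map_sub] at hαq
  linarith

end SupportingFunctional

section ProjectedFaces

variable {W E : Type*} [AddCommGroup E] [Module ℝ E] [TopologicalSpace E]

/-- The maximum of `l` over the fibre of `P` above `x` is attained and is an affine function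
`α x + c` of `x ∈ π '' P`. This is the fibrewise form of the projected faces property: `IsGreatest`
includes attainment, so that faces can be lifted along `π`. -/
def HasAffineFibreMax (π : W → E) (P : Set W) (l : W → ℝ) : Prop :=
  ∃ (α : StrongDual ℝ E) (c : ℝ), ∀ x ∈ π '' P, IsGreatest (l '' (P ∩ π ⁻¹' {x})) (α x + c)

theorem HasAffineFibreMax.inter_preimage {π : W → E} {P : Set W} {l : W → ℝ}
    (h : HasAffineFibreMax π P l) (X : Set E) : HasAffineFibreMax π (P ∩ π ⁻¹' X) l := by
  obtain ⟨α, c, hmax⟩ := h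
  refine ⟨α, c, ?_⟩
  rintro _ ⟨w, ⟨hwP, hwX⟩, rfl⟩
  have hfibre : π ⁻¹' {π w} ⊆ π ⁻¹' X := preimage_mono (singleton_subset_iff.2 hwX)
  rw [inter_assoc, inter_eq_right.2 hfibre]
  exact hmax _ (mem_image_of_mem π hwP)

variable [AddCommGroup W] [Module ℝ W] [TopologicalSpace W]

/-- The projected faces property of the pair `(P, π)`: the image under `π` of every face of `P` is
a face of `π '' P`. Faces are encoded as exposed subsets, among which `IsExposed` counts `∅`. -/
def ProjectedFacesProperty (π : W → E) (P : Set W) : Prop :=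
  ∀ F : Set W, IsExposed ℝ P F → IsExposed ℝ (π '' P) (π '' F)

theorem projectedFacesProperty_of_forall_hasAffineFibreMax {π : W → E} {P : Set W}
    (h : ∀ l : StrongDual ℝ W, HasAffineFibreMax π P l) : ProjectedFacesProperty π P := by
  intro F hF hne
  obtain ⟨l, rfl⟩ := hF hne.of_image
  obtain ⟨α, c, hmax⟩ := h l
  have hle {w : W} (hw : w ∈ P) : l w ≤ α (π w) + c :=
    (hmax _ (mem_image_of_mem π hw)).2 (mem_image_of_mem l ⟨hw, rfl⟩)
  have hlift {w : W} (hw : w ∈ P) : ∃ w' ∈ P, π w' = π w ∧ l w' = α (π w) + c := by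
    obtain ⟨w', ⟨hw'P, hw'⟩, hl⟩ := (hmax _ (mem_image_of_mem π hw)).1
    exact ⟨w', hw'P, hw', hl⟩
  refine ⟨α, Subset.antisymm ?_ ?_⟩
  · rintro _ ⟨w, ⟨hw, hwmax⟩, rfl⟩
    refine ⟨mem_image_of_mem π hw, forall_mem_image.2 fun y hy ↦ ?_⟩
    obtain ⟨y', hy'P, -, hly'⟩ := hlift hy
    linarith [hwmax y' hy'P, hle hw]
  · rintro _ ⟨⟨w, hw, rfl⟩, hwmax⟩
    obtain ⟨w', hw'P, hw', hlw'⟩ := hlift hw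
    refine ⟨w', ⟨hw'P, fun y hy ↦ ?_⟩, hw'⟩
    linarith [hwmax _ (mem_image_of_mem π hy), hle hy]

end ProjectedFaces

section FiniteDimensional

variable {W E : Type*} [AddCommGroup W] [Module ℝ W] [TopologicalSpace W]
  [NormedAddCommGroup E] [NormedSpace ℝ E] [FiniteDimensional ℝ E]

theorem exists_isMaxOn_sub_comp {π : W →L[ℝ] E} {P : Set W} (hP : Convex ℝ P) (hPc : IsCompact P)
    (l : StrongDual ℝ W) {z : E} (hz : z ∈ intrinsicInterior ℝ (π '' P)) :
    ∃ α : StrongDual ℝ E, ∃ w ∈ P, π w = z ∧ IsMaxOn (l - α ∘L π) P w := by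
  have hzP : z ∈ π '' P := intrinsicInterior_subset hz
  obtain ⟨w, ⟨hwP, rfl⟩, hwmax⟩ :=
    (hPc.inter_right (isClosed_singleton.preimage π.continuous)).exists_isMaxOn hzP
      l.continuous.continuousOn
  obtain ⟨α, hα⟩ := exists_linearMap_snd_sub_le_of_mem_intrinsicInterior
    (hP.linear_image (π.prod l).toLinearMap) (mem_image_of_mem _ hwP)
    (by rw [image_image]; exact hz)
    (forall_mem_image.2 fun y hy hyw ↦ hwmax ⟨hy, hyw⟩)
  exact ⟨LinearMap.toContinuousLinearMap α, w, hwP, rfl, fun y hy ↦ hα _ (mem_image_of_mem _ hy)⟩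

theorem ProjectedFacesProperty.hasAffineFibreMax {π : W →L[ℝ] E} {P : Set W}
    (h : ProjectedFacesProperty π P) (hP : Convex ℝ P) (hPc : IsCompact P) (l : StrongDual ℝ W) :
    HasAffineFibreMax π P l := by
  obtain rfl | hne := P.eq_empty_or_nonempty
  · exact ⟨0, 0, by simp⟩
  obtain ⟨z, hz⟩ := (hne.image π).intrinsicInterior (hP.linear_image π.toLinearMap)
  obtain ⟨α, w, hwP, rfl, hwmax⟩ := exists_isMaxOn_sub_comp hP hPc l hz
  let L : StrongDual ℝ W := l - α ∘L π
  have hsurj : π '' L.toExposed P = π '' P :=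
    eq_of_isExtreme_of_mem_intrinsicInterior
      (h _ ContinuousLinearMap.toExposed.isExposed).isExtreme (mem_image_of_mem π ⟨hwP, hwmax⟩) hz
  have hL (y : W) : l y = α (π y) + L y := by simp [L]
  refine ⟨α, L w, fun x hx ↦ ?_⟩
  obtain ⟨y, ⟨hyP, hymax⟩, rfl⟩ := hsurj ▸ hx
  have hLy : L y = L w := (hwmax hyP).antisymm (hymax w hwP)
  refine ⟨⟨y, ⟨hyP, rfl⟩, by rw [hL, hLy]⟩, forall_mem_image.2 fun y' hy' ↦ ?_⟩
  rw [hL, show π y' = π y from hy'.2, ← hLy]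
  exact add_le_add_right (hymax y' hy'.1) _

theorem pf_property_intersection_general (π : W →L[ℝ] E) {P : Set W} (hP : Convex ℝ P)
    (hPc : IsCompact P) (hPF : ProjectedFacesProperty π P) (X : Set E) :
    ProjectedFacesProperty π (P ∩ π ⁻¹' X) :=
  projectedFacesProperty_of_forall_hasAffineFibreMax fun l ↦
    (hPF.hasAffineFibreMax hP hPc l).inter_preimage X

end FiniteDimensional

/-- If the pair `(P, p_x)` has the PF-property, then for every subset `S` of the vertex set of
`p_x(P)` the pair `(P ∩ p_x⁻¹(conv S), p_x)` also has the PF-property. -/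
theorem pf_property_intersection {n d : ℕ}
    (P : Set ((Fin n → ℝ) × (Fin d → ℝ)))
    (hP : ∃ s : Set ((Fin n → ℝ) × (Fin d → ℝ)), s.Finite ∧ P = convexHull ℝ s)
    (hPF : ∀ F : Set ((Fin n → ℝ) × (Fin d → ℝ)),
        IsExposed ℝ P F → IsExposed ℝ (Prod.fst '' P) (Prod.fst '' F))
    (S : Set (Fin n → ℝ)) (hS : S ⊆ Set.extremePoints ℝ (Prod.fst '' P)) :
    ∀ F : Set ((Fin n → ℝ) × (Fin d → ℝ)),
      IsExposed ℝ (P ∩ Prod.fst ⁻¹' (convexHull ℝ S)) F →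
        IsExposed ℝ (Prod.fst '' (P ∩ Prod.fst ⁻¹' (convexHull ℝ S))) (Prod.fst '' F) := by
  obtain ⟨s, hs, rfl⟩ := hP
  exact pf_property_intersection_general (ContinuousLinearMap.fst ℝ (Fin n → ℝ) (Fin d → ℝ))
    (convex_convexHull ℝ s) (hs.isCompact_convexHull ℝ) hPF (convexHull ℝ S)
end

section
/- Let P₁ ⊆ ℝ^{n₁} × ℝ^{d₁} and P₂ ⊆ ℝ^{n₂} × ℝ^{d₂} be polytopes, let f : ℝ^{n₁} × ℝ^{n₂} → ℝⁿ ∪ {∞} be a partial function, and define P₃ := conv{(γ, α, β) : α ∈ vert(p_α(P₁)), β ∈ vert(p_β(P₂)), γ = f(α, β) ≠ ∞}, P := conv{(γ, x, y) : ∃ α, β with (α, x) ∈ vert(P₁), (β, y) ∈ vert(P₂), γ = f(α, β) ≠ ∞}, and Q := {(γ, α, x, β, y) : (α, x) ∈ P₁, (β, y) ∈ P₂, (γ, α, β) ∈ P₃}. If (P₁, p_α) and (P₂, p_β) have the PF-property and every vertex of P₃ is mapped by the projection p_γ (onto the first n coordinates) to a vertex of p_γ(P₃), then P = p_{γ,x,y}(Q),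 where p_{γ,x,y}(γ, α, x, β, y) := (γ, x, y). -/
open Set

/-!
The PF-property forces the fibres of a polytope `P` under `π` to depend linearly on the base point:
if `π z = ∑ wᵢ aᵢ` is a convex combination of points of `π '' P`, then `z = ∑ wᵢ yᵢ` for suitable
`yᵢ ∈ P` over `aᵢ`. By Hahn–Banach it suffices to find, for every functional `c`, some `l` such that
the face of `P` maximizing `c - l ∘ π` projects onto `π '' P`, because then the maximum of `c` over
a fibre is an affine function of the base point. If a face of this form does not project onto
`π '' P`, its image is a proper face by the PF-property, and tilting `l` along a functional exposing
that image makes the face absorb a new vertex; since there are finitely many vertices, a maximal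
such face does project onto `π '' P`.

Lifting a convex combination that represents `(γ, α, β) ∈ P₃` through both projections
simultaneously shows that `Q` is the convex hull of the points `(γ, v₁, v₂)` with `vᵢ` a vertex of
`Pᵢ` and `γ = f (π₁ v₁, π₂ v₂)`, and `P` is the image of that hull.
-/

/-- A polytope: the convex hull of a finite set of points. -/
def IsPolytope {V : Type*} [AddCommGroup V] [Module ℝ V] (P : Set V) : Prop :=
  ∃ s : Set V, s.Finite ∧ P = convexHull ℝ s

/-- The projected faces property (PF-property) of the pair `(P, π)`, for an arbitrary continuous
linear map `π` in place of a coordinate projection. Faces are exposed faces; `∅` counts as one. -/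
def HasProjectedFaces {V W : Type*} [AddCommGroup V] [Module ℝ V] [TopologicalSpace V]
    [AddCommGroup W] [Module ℝ W] [TopologicalSpace W] (π : V →L[ℝ] W) (P : Set V) : Prop :=
  ∀ F : Set V, IsExposed ℝ P F → IsExposed ℝ (π '' P) (π '' F)

theorem isExtreme_inter_preimage_s4 {V W : Type*} [AddCommGroup V] [Module ℝ V]
    [AddCommGroup W] [Module ℝ W] (π : V →ₗ[ℝ] W) {P : Set V} {B : Set W}
    (hB : IsExtreme ℝ (π '' P) B) : IsExtreme ℝ P (P ∩ π ⁻¹' B) := by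
  refine ⟨inter_subset_left, fun x hx y hy z hz hzxy => ⟨hx, ?_⟩⟩
  have hπz : π z ∈ openSegment ℝ (π x) (π y) :=
    (image_openSegment ℝ π.toAffineMap x y).subset (mem_image_of_mem π hzxy)
  exact hB.left_mem_of_mem_openSegment (mem_image_of_mem π hx) (mem_image_of_mem π hy) hz.2 hπz

theorem mem_toExposed_convexHull {V : Type*} [AddCommGroup V] [Module ℝ V] [TopologicalSpace V]
    {d : V →L[ℝ] ℝ} {s : Set V} {x : V} :
    x ∈ d.toExposed (convexHull ℝ s) ↔ x ∈ convexHull ℝ s ∧ ∀ y ∈ s, d y ≤ d x :=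
  and_congr_right fun _ =>
    ⟨fun h y hy => h y (subset_convexHull ℝ s hy), fun h _ hy =>
      convexHull_min (t := {y | d y ≤ d x}) h
        (convex_halfSpace_le d.toLinearMap.isLinear _) hy⟩

/-- The minimum ratio test of the simplex method. -/
theorem exists_tilt_of_common_max {ι : Type*} {s : Set ι} (hs : s.Finite) {d e : ι → ℝ} {x w : ι}
    (hd : ∀ y ∈ s, d y ≤ d x) (he : ∀ y ∈ s, e y ≤ e x) (hw : w ∈ s) (hwx : e w < e x) :
    ∃ t : ℝ, (∀ y ∈ s, d y - t * e y ≤ d x - t * e x) ∧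
      ∃ v ∈ s, e v < e x ∧ d v - t * e v = d x - t * e x := by
  obtain ⟨v, ⟨hvs, hvx⟩, hmin⟩ := exists_min_image {y ∈ s | e y < e x}
    (fun y => (d x - d y) / (e x - e y)) (hs.subset (sep_subset _ _)) ⟨w, hw, hwx⟩
  have hratio : (d x - d v) / (e x - e v) * (e x - e v) = d x - d v :=
    div_mul_cancel₀ _ (sub_pos.2 hvx).ne'
  refine ⟨(d x - d v) / (e x - e v), fun y hy => ?_, v, hvs, hvx, by linarith⟩
  rcases (he y hy).lt_or_eq with hyx | hyx
  · have := (le_div_iff₀ (sub_pos.2 hyx)).1 (hmin y ⟨hy, hyx⟩)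
    linarith
  · rw [hyx]
    linarith [hd y hy]

namespace IsPolytope

theorem convex {V : Type*} [AddCommGroup V] [Module ℝ V] {P : Set V} (hP : IsPolytope P) :
    Convex ℝ P := by
  obtain ⟨s, -, rfl⟩ := hP
  exact convex_convexHull ℝ s

theorem finite_extremePoints {V : Type*} [AddCommGroup V] [Module ℝ V] {P : Set V}
    (hP : IsPolytope P) : (P.extremePoints ℝ).Finite := by
  obtain ⟨s, hs, rfl⟩ := hP
  exact hs.subset extremePoints_convexHull_subset

variable {V : Type*} [AddCommGroup V] [Module ℝ V] [TopologicalSpace V]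
  [IsTopologicalAddGroup V] [ContinuousSMul ℝ V] {P G : Set V} {x : V}

theorem isCompact (hP : IsPolytope P) : IsCompact P := by
  obtain ⟨s, hs, rfl⟩ := hP
  exact hs.isCompact_convexHull ℝ

variable [LocallyConvexSpace ℝ V] [T2Space V]

theorem convexHull_extremePoints_of_isExtreme (hP : IsPolytope P) (hext : IsExtreme ℝ P G)
    (hclosed : IsClosed G) (hconvex : Convex ℝ G) : convexHull ℝ (G.extremePoints ℝ) = G := by
  have hfin : (G.extremePoints ℝ).Finite :=
    hP.finite_extremePoints.subset hext.extremePoints_subset_extremePoints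
  have hcompact : IsCompact G := hP.isCompact.of_isClosed_subset hclosed hext.subset
  rw [← (hfin.isClosed_convexHull ℝ).closure_eq]
  exact closure_convexHull_extremePoints hcompact hconvex

theorem convexHull_extremePoints (hP : IsPolytope P) : convexHull ℝ (P.extremePoints ℝ) = P :=
  hP.convexHull_extremePoints_of_isExtreme (.refl ℝ P) hP.isCompact.isClosed hP.convex

theorem isExposed_singleton (hP : IsPolytope P) (hx : x ∈ P.extremePoints ℝ) :
    IsExposed ℝ P {x} := by
  have hxK : x ∉ convexHull ℝ (P.extremePoints ℝ \ {x}) := fun h =>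
    (hP.convex.mem_extremePoints_iff_mem_sdiff_convexHull_sdiff.1 hx).2
      (convexHull_mono (sdiff_subset_sdiff_left extremePoints_subset) h)
  obtain ⟨d, r, hdr, hrx⟩ := geometric_hahn_banach_closed_point (convex_convexHull ℝ _)
    ((hP.finite_extremePoints.subset sdiff_subset).isClosed_convexHull ℝ) hxK
  have hlt : ∀ y ∈ P.extremePoints ℝ, y ≠ x → d y < d x := fun y hy hyx =>
    (hdr y (subset_convexHull ℝ _ ⟨hy, hyx⟩)).trans hrx
  have hface : IsExposed ℝ P (d.toExposed P) := ContinuousLinearMap.toExposed.isExposed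
  have hvertices : (d.toExposed P).extremePoints ℝ ⊆ {x} := fun y hy => by
    by_contra hyx
    exact (hlt y (hface.isExtreme.extremePoints_subset_extremePoints hy) hyx).not_ge
      (hy.1.2 x hx.1)
  have hmax : x ∈ d.toExposed P := by
    rw [← hP.convexHull_extremePoints, mem_toExposed_convexHull, hP.convexHull_extremePoints]
    refine ⟨hx.1, fun y hy => ?_⟩
    rcases eq_or_ne y x with rfl | hyx
    exacts [le_rfl, (hlt y hy hyx).le]
  have hsub : d.toExposed P ⊆ {x} := by
    rw [← hP.convexHull_extremePoints_of_isExtreme hface.isExtreme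
      (hface.isClosed hP.isCompact.isClosed) (hface.convex hP.convex)]
    exact convexHull_min hvertices (convex_singleton x)
  rwa [← hsub.antisymm (singleton_subset_iff.2 hmax)]

theorem mem_convexHull_extremePoints_fiber {W : Type*} [AddCommGroup W] [Module ℝ W]
    [TopologicalSpace W] [T1Space W] {π : V →L[ℝ] W} (hP : IsPolytope P) (hx : x ∈ P)
    (hπx : π x ∈ (π '' P).extremePoints ℝ) :
    x ∈ convexHull ℝ {v ∈ P.extremePoints ℝ | π v = π x} := by
  have hext : IsExtreme ℝ P (P ∩ π ⁻¹' {π x}) :=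
    isExtreme_inter_preimage_s4 π.toLinearMap (isExtreme_singleton.2 hπx)
  have hhull := hP.convexHull_extremePoints_of_isExtreme hext
    (hP.isCompact.isClosed.inter (isClosed_singleton.preimage π.continuous))
    (hP.convex.inter ((convex_singleton (π x)).linear_preimage π.toLinearMap))
  have hxG : x ∈ convexHull ℝ ((P ∩ π ⁻¹' {π x}).extremePoints ℝ) := by
    rw [hhull]
    exact ⟨hx, rfl⟩
  have hsub : (P ∩ π ⁻¹' {π x}).extremePoints ℝ ⊆ {v ∈ P.extremePoints ℝ | π v = π x} :=
    fun _ hv => ⟨hext.extremePoints_subset_extremePoints hv, hv.1.2⟩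
  exact convexHull_mono hsub hxG

end IsPolytope

namespace HasProjectedFaces

section

variable {V W : Type*} [AddCommGroup V] [Module ℝ V] [TopologicalSpace V]
  [AddCommGroup W] [Module ℝ W] [TopologicalSpace W] {π : V →L[ℝ] W}

theorem exists_toExposed_sub_ssubset {s : Set V} (hs : s.Finite)
    (hPF : HasProjectedFaces π (convexHull ℝ s)) {d : V →L[ℝ] ℝ} {w : V} (hw : w ∈ s)
    (hπw : π w ∉ π '' d.toExposed (convexHull ℝ s)) :
    ∃ l : W →L[ℝ] ℝ, s ∩ d.toExposed (convexHull ℝ s) ⊂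
      s ∩ (d - l.comp π).toExposed (convexHull ℝ s) := by
  obtain ⟨x, hxs, hdx⟩ := exists_max_image s d hs ⟨w, hw⟩
  have hxface : x ∈ d.toExposed (convexHull ℝ s) :=
    mem_toExposed_convexHull.2 ⟨subset_convexHull ℝ s hxs, hdx⟩
  obtain ⟨u, hu⟩ := hPF _ ContinuousLinearMap.toExposed.isExposed ⟨π x, mem_image_of_mem π hxface⟩
  have hu_max : ∀ z ∈ d.toExposed (convexHull ℝ s), ∀ y ∈ convexHull ℝ s, u (π y) ≤ u (π z) :=
    fun z hz y hy => (hu.subset (mem_image_of_mem π hz)).2 _ (mem_image_of_mem π hy)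
  have hux : ∀ y ∈ s, u (π y) ≤ u (π x) := fun y hy =>
    hu_max x hxface y (subset_convexHull ℝ s hy)
  have huw : u (π w) < u (π x) := by
    refine (hux w hw).lt_of_ne fun heq => hπw (hu.superset ?_)
    refine ⟨mem_image_of_mem π (subset_convexHull ℝ s hw), ?_⟩
    rintro _ ⟨y, hy, rfl⟩
    exact (hu_max x hxface y hy).trans heq.ge
  obtain ⟨t, ht, v, hvs, huv, hv⟩ := exists_tilt_of_common_max hs hdx hux hw huw
  have mem_new : ∀ z ∈ s, d z - t * u (π z) = d x - t * u (π x) →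
      z ∈ (d - (t • u).comp π).toExposed (convexHull ℝ s) := fun z hz hzx =>
    mem_toExposed_convexHull.2 ⟨subset_convexHull ℝ s hz, fun y hy => (ht y hy).trans hzx.ge⟩
  refine ⟨t • u, ssubset_iff_exists.2 ⟨fun z ⟨hzs, hz⟩ => ⟨hzs, mem_new z hzs ?_⟩,
    v, ⟨hvs, mem_new v hvs hv⟩, fun hvface => ?_⟩⟩
  · rw [(hdx z hzs).antisymm (hz.2 x hxface.1), (hux z hzs).antisymm (hu_max z hz x hxface.1)]
  · exact huv.not_ge (hu_max v hvface.2 x hxface.1)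

theorem exists_image_toExposed_eq {P : Set V} (hP : IsPolytope P) (hPF : HasProjectedFaces π P)
    (c : V →L[ℝ] ℝ) :
    ∃ l : W →L[ℝ] ℝ, π '' (c - l.comp π).toExposed P = π '' P := by
  obtain ⟨s, hs, rfl⟩ := hP
  let contact (l : W →L[ℝ] ℝ) : Set V := s ∩ (c - l.comp π).toExposed (convexHull ℝ s)
  have hfin : (contact '' univ).Finite :=
    hs.finite_subsets.subset (image_subset_iff.2 fun _ _ => inter_subset_left)
  obtain ⟨l, hl⟩ := hfin.exists_maximalFor' contact univ univ_nonempty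
  have hface := ContinuousLinearMap.toExposed.isExposed (𝕜 := ℝ) (l := c - l.comp π)
    (A := convexHull ℝ s)
  refine ⟨l, (image_mono hface.subset).antisymm ?_⟩
  suffices hcover : π '' s ⊆ π '' (c - l.comp π).toExposed (convexHull ℝ s) by
    refine (π.toLinearMap.image_convexHull s).trans_subset (convexHull_min hcover ?_)
    exact (hface.convex (convex_convexHull ℝ s)).linear_image π.toLinearMap
  rintro _ ⟨w, hw, rfl⟩
  by_contra hπw
  obtain ⟨l', hl'⟩ := hPF.exists_toExposed_sub_ssubset hs hw hπw
  have htilt : c - l.comp π - l'.comp π = c - (l + l').comp π := by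
    rw [ContinuousLinearMap.add_comp, sub_sub]
  rw [htilt] at hl'
  exact hl.not_gt (mem_univ (l + l')) hl'

end

section

variable {V W : Type*} [AddCommGroup V] [Module ℝ V] [TopologicalSpace V]
  [IsTopologicalAddGroup V] [ContinuousSMul ℝ V] [LocallyConvexSpace ℝ V] [T2Space V]
  [AddCommGroup W] [Module ℝ W] [TopologicalSpace W] {π : V →L[ℝ] W} {P : Set V}

theorem map_mem_extremePoints (hP : IsPolytope P) (hPF : HasProjectedFaces π P) {x : V}
    (hx : x ∈ P.extremePoints ℝ) : π x ∈ (π '' P).extremePoints ℝ := by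
  have hface := hPF {x} (hP.isExposed_singleton hx)
  rw [image_singleton] at hface
  exact isExtreme_singleton.1 hface.isExtreme

theorem exists_sum_eq_of_map_eq_sum [T1Space W] (hP : IsPolytope P) (hPF : HasProjectedFaces π P)
    {ι : Type*} [Fintype ι] {w : ι → ℝ} (hw₀ : ∀ i, 0 ≤ w i) (hw₁ : ∑ i, w i = 1) {a : ι → W}
    (ha : ∀ i, a i ∈ π '' P) {z : V} (hz : z ∈ P) (hπz : π z = ∑ i, w i • a i) :
    ∃ y : ι → V, (∀ i, y i ∈ P ∧ π (y i) = a i) ∧ ∑ i, w i • y i = z := by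
  let combine : (ι → V) →L[ℝ] V := ∑ i, w i • ContinuousLinearMap.proj i
  have combine_apply (y : ι → V) : combine y = ∑ i, w i • y i := by
    simp only [combine, sum_apply, smul_apply,
      ContinuousLinearMap.proj_apply]
  let fibers : Set (ι → V) := univ.pi fun i => P ∩ π ⁻¹' {a i}
  have hcompact : IsCompact fibers := isCompact_univ_pi fun i =>
    hP.isCompact.inter_right (isClosed_singleton.preimage π.continuous)
  have hconvex : Convex ℝ fibers := convex_pi fun i _ =>
    hP.convex.inter ((convex_singleton (a i)).linear_preimage π.toLinearMap)
  suffices hzK : z ∈ combine '' fibers by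
    obtain ⟨y, hy, hyz⟩ := hzK
    exact ⟨y, fun i => hy i (mem_univ i), (combine_apply y).symm.trans hyz⟩
  by_contra hzK
  obtain ⟨c, r, hcr, hrz⟩ := geometric_hahn_banach_closed_point
    (hconvex.linear_image combine.toLinearMap) (hcompact.image combine.continuous).isClosed hzK
  obtain ⟨l, hl⟩ := hPF.exists_image_toExposed_eq hP c
  have hlift : ∀ i, ∃ y ∈ (c - l.comp π).toExposed P, π y = a i := fun i => hl.superset (ha i)
  choose y hy hπy using hlift
  have hπ : π (combine y) = π z := by
    simp only [combine_apply, map_sum, map_smul, hπy, hπz]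
  have hle : (c - l.comp π) z ≤ (c - l.comp π) (combine y) :=
    calc (c - l.comp π) z = ∑ i, w i * (c - l.comp π) z := by rw [← Finset.sum_mul, hw₁, one_mul]
      _ ≤ ∑ i, w i * (c - l.comp π) (y i) := by
        gcongr with i
        exacts [hw₀ i, (hy i).2 z hz]
      _ = (c - l.comp π) (combine y) := by
        simp only [combine_apply, map_sum, map_smul, smul_eq_mul]
  have hcz : c z ≤ c (combine y) := by
    simpa only [sub_apply, ContinuousLinearMap.comp_apply, hπ,
      sub_le_sub_iff_right] using hle
  exact (hrz.trans_le hcz).not_gt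
    (hcr _ (mem_image_of_mem combine fun i _ => ⟨(hy i).1, hπy i⟩))

end

end HasProjectedFaces

section Composition

variable {G : Type*} [AddCommGroup G] [Module ℝ G]

theorem mk_mem_convexHull_of_mem_convexHull {V₁ V₂ : Type*} [AddCommGroup V₁] [Module ℝ V₁]
    [AddCommGroup V₂] [Module ℝ V₂] {A : Set V₁} {B : Set V₂} {S : Set (G × V₁ × V₂)}
    {g : G} {x : V₁} {y : V₂} (hx : x ∈ convexHull ℝ A) (hy : y ∈ convexHull ℝ B)
    (hS : ∀ a ∈ A, ∀ b ∈ B, (g, a, b) ∈ S) : (g, x, y) ∈ convexHull ℝ S := by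
  have hprod : (g, x, y) ∈ convexHull ℝ ({g} ×ˢ A ×ˢ B) := by
    rw [convexHull_prod, convexHull_prod, convexHull_singleton]
    exact ⟨rfl, hx, hy⟩
  refine convexHull_mono ?_ hprod
  rintro ⟨_, a, b⟩ ⟨rfl, ha, hb⟩
  exact hS a ha b hb

variable {V₁ V₂ W₁ W₂ : Type*}
  [AddCommGroup V₁] [Module ℝ V₁] [TopologicalSpace V₁] [IsTopologicalAddGroup V₁]
  [ContinuousSMul ℝ V₁] [LocallyConvexSpace ℝ V₁] [T2Space V₁]
  [AddCommGroup V₂] [Module ℝ V₂] [TopologicalSpace V₂] [IsTopologicalAddGroup V₂]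
  [ContinuousSMul ℝ V₂] [LocallyConvexSpace ℝ V₂] [T2Space V₂]
  [AddCommGroup W₁] [Module ℝ W₁] [TopologicalSpace W₁]
  [AddCommGroup W₂] [Module ℝ W₂] [TopologicalSpace W₂]
  {π₁ : V₁ →L[ℝ] W₁} {π₂ : V₂ →L[ℝ] W₂} {P₁ : Set V₁} {P₂ : Set V₂}

theorem convexHull_vertices_subset_composition
    (hP₁ : IsPolytope P₁) (hP₂ : IsPolytope P₂)
    (hPF₁ : HasProjectedFaces π₁ P₁) (hPF₂ : HasProjectedFaces π₂ P₂) (R : Set (G × W₁ × W₂)) :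
    convexHull ℝ {q : G × V₁ × V₂ | q.2.1 ∈ P₁.extremePoints ℝ ∧ q.2.2 ∈ P₂.extremePoints ℝ ∧
        (q.1, π₁ q.2.1, π₂ q.2.2) ∈ R} ⊆
      {q | q.2.1 ∈ P₁ ∧ q.2.2 ∈ P₂ ∧ (q.1, π₁ q.2.1, π₂ q.2.2) ∈ convexHull ℝ
        {r | r.2.1 ∈ (π₁ '' P₁).extremePoints ℝ ∧ r.2.2 ∈ (π₂ '' P₂).extremePoints ℝ ∧ r ∈ R}} := by
  let project : G × V₁ × V₂ →ₗ[ℝ] G × W₁ × W₂ :=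
    LinearMap.id.prodMap (π₁.toLinearMap.prodMap π₂.toLinearMap)
  refine convexHull_min ?_ ?_
  · rintro q ⟨hq₁, hq₂, hqR⟩
    exact ⟨hq₁.1, hq₂.1, subset_convexHull ℝ _
      ⟨hPF₁.map_mem_extremePoints hP₁ hq₁, hPF₂.map_mem_extremePoints hP₂ hq₂, hqR⟩⟩
  · exact (hP₁.convex.linear_preimage
        (LinearMap.fst ℝ V₁ V₂ ∘ₗ LinearMap.snd ℝ G (V₁ × V₂))).inter
      ((hP₂.convex.linear_preimage
        (LinearMap.snd ℝ V₁ V₂ ∘ₗ LinearMap.snd ℝ G (V₁ × V₂))).inter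
      ((convex_convexHull ℝ _).linear_preimage project))

theorem composition_subset_convexHull_vertices [T1Space W₁] [T1Space W₂]
    (hP₁ : IsPolytope P₁) (hP₂ : IsPolytope P₂)
    (hPF₁ : HasProjectedFaces π₁ P₁) (hPF₂ : HasProjectedFaces π₂ P₂) (R : Set (G × W₁ × W₂)) :
    {q : G × V₁ × V₂ | q.2.1 ∈ P₁ ∧ q.2.2 ∈ P₂ ∧ (q.1, π₁ q.2.1, π₂ q.2.2) ∈ convexHull ℝ
        {r | r.2.1 ∈ (π₁ '' P₁).extremePoints ℝ ∧ r.2.2 ∈ (π₂ '' P₂).extremePoints ℝ ∧ r ∈ R}} ⊆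
      convexHull ℝ {q | q.2.1 ∈ P₁.extremePoints ℝ ∧ q.2.2 ∈ P₂.extremePoints ℝ ∧
        (q.1, π₁ q.2.1, π₂ q.2.2) ∈ R} := by
  rintro ⟨g, z₁, z₂⟩ ⟨hz₁, hz₂, hgz⟩
  obtain ⟨ι, _, w, r, hw₀, hw₁, hr, hsum⟩ := mem_convexHull_iff_exists_fintype.1 hgz
  obtain ⟨hg, hπz₁, hπz₂⟩ :
      ∑ i, w i • (r i).1 = g ∧ ∑ i, w i • (r i).2.1 = π₁ z₁ ∧ ∑ i, w i • (r i).2.2 = π₂ z₂ := by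
    simpa only [Prod.ext_iff, Prod.fst_sum, Prod.snd_sum, Prod.smul_fst, Prod.smul_snd] using hsum
  obtain ⟨y₁, hy₁, rfl⟩ :=
    hPF₁.exists_sum_eq_of_map_eq_sum hP₁ hw₀ hw₁ (fun i => (hr i).1.1) hz₁ hπz₁.symm
  obtain ⟨y₂, hy₂, rfl⟩ :=
    hPF₂.exists_sum_eq_of_map_eq_sum hP₂ hw₀ hw₁ (fun i => (hr i).2.1.1) hz₂ hπz₂.symm
  have hlift : (g, ∑ i, w i • y₁ i, ∑ i, w i • y₂ i) =
      ∑ i, w i • ((r i).1, y₁ i, y₂ i) := by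
    simp only [← hg, Prod.ext_iff, Prod.fst_sum, Prod.snd_sum, Prod.smul_fst, Prod.smul_snd,
      and_self]
  rw [hlift]
  refine (convex_convexHull ℝ _).sum_mem (fun i _ => hw₀ i) hw₁ fun i _ => ?_
  obtain ⟨hr₁, hr₂, hrR⟩ := hr i
  obtain ⟨hyP₁, hπy₁⟩ := hy₁ i
  obtain ⟨hyP₂, hπy₂⟩ := hy₂ i
  refine mk_mem_convexHull_of_mem_convexHull
    (hP₁.mem_convexHull_extremePoints_fiber hyP₁ (hπy₁ ▸ hr₁))
    (hP₂.mem_convexHull_extremePoints_fiber hyP₂ (hπy₂ ▸ hr₂)) ?_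
  rintro v₁ ⟨hv₁, hπv₁⟩ v₂ ⟨hv₂, hπv₂⟩
  refine ⟨hv₁, hv₂, ?_⟩
  simpa only [hπv₁, hπy₁, hπv₂, hπy₂] using hrR

end Composition

/-- The relation `R` plays the role of the graph `{(γ, α, β) | γ = f (α, β) ≠ ∞}`; it may be
multivalued. -/
theorem margot_composition_projection_general {G E₁ F₁ E₂ F₂ : Type*} [AddCommGroup G] [Module ℝ G]
    [AddCommGroup E₁] [Module ℝ E₁] [TopologicalSpace E₁] [IsTopologicalAddGroup E₁]
    [ContinuousSMul ℝ E₁] [LocallyConvexSpace ℝ E₁] [T2Space E₁]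
    [AddCommGroup F₁] [Module ℝ F₁] [TopologicalSpace F₁] [IsTopologicalAddGroup F₁]
    [ContinuousSMul ℝ F₁] [LocallyConvexSpace ℝ F₁] [T2Space F₁]
    [AddCommGroup E₂] [Module ℝ E₂] [TopologicalSpace E₂] [IsTopologicalAddGroup E₂]
    [ContinuousSMul ℝ E₂] [LocallyConvexSpace ℝ E₂] [T2Space E₂]
    [AddCommGroup F₂] [Module ℝ F₂] [TopologicalSpace F₂] [IsTopologicalAddGroup F₂]
    [ContinuousSMul ℝ F₂] [LocallyConvexSpace ℝ F₂] [T2Space F₂]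
    {P₁ : Set (E₁ × F₁)} {P₂ : Set (E₂ × F₂)} (hP₁ : IsPolytope P₁) (hP₂ : IsPolytope P₂)
    (hPF₁ : HasProjectedFaces (.fst ℝ E₁ F₁) P₁) (hPF₂ : HasProjectedFaces (.fst ℝ E₂ F₂) P₂)
    (R : Set (G × E₁ × E₂)) :
    convexHull ℝ {q : G × F₁ × F₂ | ∃ α β, (α, q.2.1) ∈ P₁.extremePoints ℝ ∧
        (β, q.2.2) ∈ P₂.extremePoints ℝ ∧ (q.1, α, β) ∈ R} =
      (fun q : G × (E₁ × F₁) × (E₂ × F₂) => (q.1, q.2.1.2, q.2.2.2)) ''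
        {q | q.2.1 ∈ P₁ ∧ q.2.2 ∈ P₂ ∧ (q.1, q.2.1.1, q.2.2.1) ∈ convexHull ℝ
          {r | r.2.1 ∈ (Prod.fst '' P₁).extremePoints ℝ ∧
            r.2.2 ∈ (Prod.fst '' P₂).extremePoints ℝ ∧ r ∈ R}} := by
  let project : G × (E₁ × F₁) × (E₂ × F₂) →ₗ[ℝ] G × F₁ × F₂ :=
    LinearMap.id.prodMap ((LinearMap.snd ℝ E₁ F₁).prodMap (LinearMap.snd ℝ E₂ F₂))
  let vertices : Set (G × (E₁ × F₁) × (E₂ × F₂)) :=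
    {q | q.2.1 ∈ P₁.extremePoints ℝ ∧ q.2.2 ∈ P₂.extremePoints ℝ ∧ (q.1, q.2.1.1, q.2.2.1) ∈ R}
  calc _ = convexHull ℝ (project '' vertices) := by
        congr 1
        ext ⟨g, x, y⟩
        constructor
        · rintro ⟨α, β, hα, hβ, hR⟩
          exact ⟨(g, (α, x), (β, y)), ⟨hα, hβ, hR⟩, rfl⟩
        · rintro ⟨⟨_, ⟨α, _⟩, ⟨β, _⟩⟩, ⟨hα, hβ, hR⟩, ⟨⟩⟩
          exact ⟨α, β, hα, hβ, hR⟩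
    _ = project '' convexHull ℝ vertices := (project.image_convexHull vertices).symm
    _ = _ := congrArg (project '' ·)
        ((convexHull_vertices_subset_composition hP₁ hP₂ hPF₁ hPF₂ R).antisymm
          (composition_subset_convexHull_vertices hP₁ hP₂ hPF₁ hPF₂ R))

/-- Part a) of Margot's theorem.  Given polytopes `P₁ ⊆ ℝ^{n₁} × ℝ^{d₁}`,
`P₂ ⊆ ℝ^{n₂} × ℝ^{d₂}`, a partial composition function
`f : ℝ^{n₁} × ℝ^{n₂} → ℝⁿ ∪ {∞}` (modeled as `Option`-valued), and the polytopes
`P₃ = conv{(γ,α,β) : α ∈ vert p_α(P₁), β ∈ vert p_β(P₂), γ = f(α,β) ≠ ∞}`,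
`P = conv{(γ,x,y) : ∃ α β, (α,x) ∈ vert P₁, (β,y) ∈ vert P₂, γ = f(α,β) ≠ ∞}` and
`Q = {(γ,α,x,β,y) : (α,x) ∈ P₁, (β,y) ∈ P₂, (γ,α,β) ∈ P₃}`:
if `(P₁, p_α)` and `(P₂, p_β)` have the PF-property and every vertex of `P₃` is projected by
`p_γ` to a vertex of `p_γ(P₃)`, then `P = p_{γ,x,y}(Q)`. -/
theorem margot_composition_projection {n n₁ d₁ n₂ d₂ : ℕ}
    (P₁ : Set ((Fin n₁ → ℝ) × (Fin d₁ → ℝ)))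
    (P₂ : Set ((Fin n₂ → ℝ) × (Fin d₂ → ℝ)))
    (f : (Fin n₁ → ℝ) × (Fin n₂ → ℝ) → Option (Fin n → ℝ))
    (P₃ : Set ((Fin n → ℝ) × (Fin n₁ → ℝ) × (Fin n₂ → ℝ)))
    (P : Set ((Fin n → ℝ) × (Fin d₁ → ℝ) × (Fin d₂ → ℝ)))
    (Q : Set ((Fin n → ℝ) × ((Fin n₁ → ℝ) × (Fin d₁ → ℝ)) × ((Fin n₂ → ℝ) × (Fin d₂ → ℝ))))
    (hP₁ : ∃ s : Set ((Fin n₁ → ℝ) × (Fin d₁ → ℝ)), s.Finite ∧ P₁ = convexHull ℝ s)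
    (hP₂ : ∃ s : Set ((Fin n₂ → ℝ) × (Fin d₂ → ℝ)), s.Finite ∧ P₂ = convexHull ℝ s)
    (hP₃ : P₃ = convexHull ℝ
      {q | q.2.1 ∈ Set.extremePoints ℝ (Prod.fst '' P₁) ∧
           q.2.2 ∈ Set.extremePoints ℝ (Prod.fst '' P₂) ∧
           f (q.2.1, q.2.2) = some q.1})
    (hPdef : P = convexHull ℝ
      {q | ∃ α β, (α, q.2.1) ∈ Set.extremePoints ℝ P₁ ∧
                  (β, q.2.2) ∈ Set.extremePoints ℝ P₂ ∧
                  f (α, β) = some q.1})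
    (hQ : Q = {q | q.2.1 ∈ P₁ ∧ q.2.2 ∈ P₂ ∧ (q.1, q.2.1.1, q.2.2.1) ∈ P₃})
    (hPF₁ : ∀ F : Set ((Fin n₁ → ℝ) × (Fin d₁ → ℝ)),
        IsExposed ℝ P₁ F → IsExposed ℝ (Prod.fst '' P₁) (Prod.fst '' F))
    (hPF₂ : ∀ F : Set ((Fin n₂ → ℝ) × (Fin d₂ → ℝ)),
        IsExposed ℝ P₂ F → IsExposed ℝ (Prod.fst '' P₂) (Prod.fst '' F))
    (hvert₃ : ∀ v ∈ Set.extremePoints ℝ P₃,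
        v.1 ∈ Set.extremePoints ℝ (Prod.fst '' P₃)) :
    P = (fun q => (q.1, q.2.1.2, q.2.2.2)) '' Q := by
  rw [hPdef, hQ, hP₃]
  exact margot_composition_projection_general hP₁ hP₂ hPF₁ hPF₂ {q | f (q.2.1, q.2.2) = some q.1}
end
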